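/- arXiv:2503.18088 — 8 statements merged into one kernel-verified Lean document; each statement's English description precedes it below -/
import Mathlib

section
/- Let G be a finitely generated nilpotent group, let σ be a 2-cocycle on G, and let N be a normal subgroup of G of finite index. Then Z(G,σ) ∩ N is contained in Z(N, σ|_N), and Z(G,σ) ∩ N has finite index in Z(N, σ|_N), where σ|_N denotes the restriction of σ to N × N. -/
/-- A (normalized) 2-cocycle on a discrete group `G` with values in the circle group. -/
def IsTwoCocycle {G : Type*} [Group G] (σ : G → G → Circle) : Prop :=
  (∀ g, σ g 1 = 1) ∧ (∀ g, σ 1 g = 1) ∧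
    ∀ g h k, σ g h * σ (g * h) k = σ h k * σ g (h * k)

/-- The twisted center `Z(G,σ)`: all central elements `g` such that `σ(g,h) = σ(h,g)`
for every `h ∈ G`. -/
def twistedCenter {G : Type*} [Group G] (σ : G → G → Circle) : Set G :=
  {g | g ∈ Subgroup.center G ∧ ∀ h, σ g h = σ h g}

/-- The collection of left cosets `b • A` with `b` ranging over `B`.  When `A` is (the
carrier of) a subgroup of (the subgroup with carrier) `B`, this is the coset space of
`A` in `B`, so `A` has finite index in `B` precisely when this collection is finite. -/
def cosetsIn {G : Type*} [Group G] (A B : Set G) : Set (Set G) :=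
  {C | ∃ b ∈ B, C = (fun a => b * a) '' A}

open scoped commutatorElement

/-!
The cocycle defines a central extension `E = 𝕋 ×_σ G`, and `g` lies in `Z(G,σ)` exactly when a lift
of `g` to `E` is central.  Since `E` has central kernel over `G`, it is again nilpotent.  A lift `x`
of an element of `Z(N,σ|_N)` commutes with the preimage of `N`, hence with all `n`-th powers for a
suitable `n > 0`.  Climbing the upper central series of `E`, where `⁅x, e⁆` is central modulo the
previous stage and therefore `⁅x ^ n, e⁆ = ⁅x, e⁆ ^ n = ⁅x, e ^ n⁆`, some power of `x` is central.
So `Z(N,σ|_N)` is abelian and torsion modulo `Z(G,σ) ∩ N`; it is also finitely generated, because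
all subgroups of a finitely generated nilpotent group are, so the quotient is finite.
-/

section FinitelyGenerated

variable {G Q : Type*} [Group G] [Group Q]

lemma fg_map_of_fg (f : G →* Q) {H : Subgroup G} (h : H.FG) : (H.map f).FG :=
  (Subgroup.fg_iff_submonoid_fg _).mpr (((Subgroup.fg_iff_submonoid_fg H).mp h).map f)

lemma exists_finite_subset_map_closure_eq (f : G →* Q) {H : Subgroup G} (h : (H.map f).FG) :
    ∃ S : Set G, S.Finite ∧ S ⊆ H ∧ (Subgroup.closure S).map f = H.map f := by
  obtain ⟨T, hT, hTfin⟩ := (Subgroup.fg_iff _).mp h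
  have hTsub : T ⊆ f '' H := by
    rw [← Subgroup.coe_map, ← hT]
    exact Subgroup.subset_closure
  obtain ⟨S, hSH, hSfin, rfl⟩ := Set.exists_subset_image_finite_and.mp ⟨T, hTsub, hTfin, rfl⟩
  exact ⟨S, hSfin, hSH, by rw [MonoidHom.map_closure, hT]⟩

lemma fg_of_fg_map_of_fg_inf_ker (f : G →* Q) {H : Subgroup G} (hmap : (H.map f).FG)
    (hker : (H ⊓ f.ker).FG) : H.FG := by
  obtain ⟨S, hSfin, hSH, hS⟩ := exists_finite_subset_map_closure_eq f hmap
  have hSH' : Subgroup.closure S ≤ H := (Subgroup.closure_le H).mpr hSH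
  have hle : H ≤ Subgroup.closure S ⊔ (H ⊓ f.ker) := by
    intro x hx
    obtain ⟨y, hy, hyx⟩ : f x ∈ (Subgroup.closure S).map f := hS ▸ Subgroup.mem_map_of_mem f hx
    have hker : y⁻¹ * x ∈ H ⊓ f.ker :=
      Subgroup.mem_inf.mpr ⟨H.mul_mem (H.inv_mem (hSH' hy)) hx,
        MonoidHom.mem_ker.mpr (by rw [map_mul, map_inv, hyx, inv_mul_cancel])⟩
    simpa only [mul_inv_cancel_left] using Subgroup.mul_mem_sup hy hker
  rw [le_antisymm hle (sup_le hSH' inf_le_left)]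
  exact Subgroup.FG.sup ((Subgroup.fg_iff _).mpr ⟨S, rfl, hSfin⟩) hker

end FinitelyGenerated

section CommutatorSubgroup

variable {G : Type*} [Group G]

lemma normal_of_le_center {H : Subgroup G} (hH : H ≤ Subgroup.center G) : H.Normal where
  conj_mem h hh g := by rwa [Subgroup.mem_center_iff.mp (hH hh) g, mul_inv_cancel_right]

/- Modulo `L`, the hypothesis says that `S` and `T` commute elementwise, and centralizers are
subgroups. -/
lemma commutator_closure_closure_le {S T : Set G} {L : Subgroup G} [L.Normal]
    (h : ∀ s ∈ S, ∀ t ∈ T, ⁅s, t⁆ ∈ L) : ⁅Subgroup.closure S, Subgroup.closure T⁆ ≤ L := by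
  have hST : QuotientGroup.mk' L '' S ⊆ Subgroup.centralizer (QuotientGroup.mk' L '' T) := by
    rintro _ ⟨s, hs, rfl⟩
    rw [SetLike.mem_coe, Subgroup.mem_centralizer_iff]
    rintro _ ⟨t, ht, rfl⟩
    have hst : QuotientGroup.mk' L ⁅s, t⁆ = 1 := (QuotientGroup.eq_one_iff _).mpr (h s hs t ht)
    rw [map_commutatorElement, commutatorElement_eq_one_iff_mul_comm] at hst
    exact hst.symm
  rw [← QuotientGroup.ker_mk' L, ← Subgroup.map_eq_bot_iff, Subgroup.map_commutator,
    Subgroup.commutator_eq_bot_iff_le_centralizer, MonoidHom.map_closure, MonoidHom.map_closure,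
    Subgroup.centralizer_closure, Subgroup.closure_le]
  exact hST

lemma commutator_fg_of_le_closure_sup_center {H K : Subgroup G}
    (hcenter : ⁅H, K⁆ ≤ Subgroup.center G) (hK : K.FG) {S : Set G} (hSfin : S.Finite)
    (hSH : S ⊆ H) (hH : H ≤ Subgroup.closure S ⊔ Subgroup.center G) : ⁅H, K⁆.FG := by
  obtain ⟨T, rfl, hTfin⟩ := (Subgroup.fg_iff K).mp hK
  set L := Subgroup.closure (Set.image2 (fun s t : G => ⁅s, t⁆) S T) with hL
  have hLle : L ≤ ⁅H, Subgroup.closure T⁆ := by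
    rw [hL, Subgroup.closure_le]
    rintro _ ⟨s, hs, t, ht, rfl⟩
    exact Subgroup.commutator_mem_commutator (hSH hs) (Subgroup.subset_closure ht)
  have : L.Normal := normal_of_le_center (hLle.trans hcenter)
  have hleL : ⁅H, Subgroup.closure T⁆ ≤ L := by
    have hH' : H ≤ Subgroup.closure (S ∪ Subgroup.center G) := by
      rwa [Subgroup.closure_union, Subgroup.closure_eq]
    refine (Subgroup.commutator_mono hH' le_rfl).trans (commutator_closure_closure_le ?_)
    rintro s (hs | hs) t ht
    · exact Subgroup.subset_closure ⟨s, hs, t, ht, rfl⟩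
    · rw [commutatorElement_eq_one_iff_mul_comm.mpr (Subgroup.mem_center_iff.mp hs t).symm]
      exact L.one_mem
  exact (Subgroup.fg_iff _).mpr ⟨_, le_antisymm hLle hleL, hSfin.image2 _ hTfin⟩

end CommutatorSubgroup

/-- A group is Noetherian, or satisfies the maximal condition on subgroups, if all of its subgroups
are finitely generated.  This is the property of finitely generated nilpotent groups that makes
`Z(N,σ|_N)` finitely generated. -/
def IsNoetherianGroup (G : Type*) [Group G] : Prop :=
  ∀ H : Subgroup G, H.FG

namespace IsNoetherianGroup

open scoped IsMulCommutative in
lemma of_isMulCommutative (A : Type*) [Group A] [IsMulCommutative A] [Group.FG A] :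
    IsNoetherianGroup A := by
  have : Module.Finite ℤ (Additive A) := Module.Finite.iff_addGroup_fg.mpr inferInstance
  intro H
  rw [Subgroup.fg_iff_add_fg, ← AddSubgroup.toIntSubmodule_toAddSubgroup H.toAddSubgroup,
    ← Submodule.fg_iff_addSubgroup_fg]
  exact IsNoetherian.noetherian _

lemma of_ker {G Q : Type*} [Group G] [Group Q] (f : G →* Q) (hker : IsNoetherianGroup f.ker)
    (hQ : IsNoetherianGroup Q) : IsNoetherianGroup G := by
  intro H
  refine fg_of_fg_map_of_fg_inf_ker f (hQ _) ?_
  rw [← Subgroup.subgroupOf_map_subtype]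
  exact fg_map_of_fg _ (hker _)

lemma of_lowerCentralSeries_succ_eq_bot {G : Type*} [Group G] [Group.FG G] {n : ℕ}
    (h : (⊤ : Subgroup G).lowerCentralSeries (n + 1) = ⊥) : IsNoetherianGroup G := by
  induction n generalizing G with
  | zero =>
    have : IsMulCommutative G := by
      rwa [← commutator_eq_bot_iff, ← Subgroup.top_lowerCentralSeries_one]
    exact of_isMulCommutative G
  | succ n ih =>
    set C := (⊤ : Subgroup G).lowerCentralSeries (n + 1)
    have hcenter : C ≤ Subgroup.center G :=
      Subgroup.commutator_top_right_eq_bot_iff_le_center.mp h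
    have hker : (QuotientGroup.mk' C).ker = C := QuotientGroup.ker_mk' C
    have hquot : IsNoetherianGroup (G ⧸ C) := by
      apply ih
      rw [← Subgroup.map_top_of_surjective _ (QuotientGroup.mk'_surjective C),
        ← Subgroup.map_lowerCentralSeries, Subgroup.map_eq_bot_iff, hker]
    have hCfg : C.FG := by
      obtain ⟨S, hSfin, hSsub, hS⟩ := exists_finite_subset_map_closure_eq (QuotientGroup.mk' C)
        (hquot (((⊤ : Subgroup G).lowerCentralSeries n).map _))
      refine commutator_fg_of_le_closure_sup_center hcenter (Group.fg_def.mp inferInstance)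
        hSfin hSsub ?_
      calc (⊤ : Subgroup G).lowerCentralSeries n
          ≤ Subgroup.closure S ⊔ C := by
            rw [← hker, ← Subgroup.map_le_map_iff, hS]
        _ ≤ Subgroup.closure S ⊔ Subgroup.center G := sup_le_sup_left hcenter _
    have : Group.FG C := (Group.fg_iff_subgroup_fg C).mpr hCfg
    have : IsMulCommutative C := .of_setLike_mul_comm fun a _ b hb =>
      Subgroup.mem_center_iff.mp (hcenter hb) a
    exact of_ker (QuotientGroup.mk' C) (hker.symm ▸ of_isMulCommutative C) hquot

lemma of_isNilpotent (G : Type*) [Group G] [Group.IsNilpotent G] [Group.FG G] :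
    IsNoetherianGroup G := by
  obtain ⟨n, hn⟩ := Subgroup.nilpotent_iff_lowerCentralSeries.mp ‹Group.IsNilpotent G›
  exact of_lowerCentralSeries_succ_eq_bot
    (eq_bot_mono (Subgroup.lowerCentralSeries_antitone ⊤ n.le_succ) hn)

end IsNoetherianGroup

section CentralPowers

variable {G : Type*} [Group G]

lemma commutatorElement_pow_right {a b : G} (h : Commute ⁅a, b⁆ b) (n : ℕ) :
    ⁅a, b ^ n⁆ = ⁅a, b⁆ ^ n := by
  calc ⁅a, b ^ n⁆ = (a * b * a⁻¹) ^ n * (b ^ n)⁻¹ := by rw [commutatorElement_def, conj_pow]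
    _ = (⁅a, b⁆ * b) ^ n * (b ^ n)⁻¹ := by rw [commutatorElement_def, inv_mul_cancel_right]
    _ = ⁅a, b⁆ ^ n := by rw [h.mul_pow, mul_inv_cancel_right]

lemma commutatorElement_pow_left {a b : G} (h : Commute ⁅a, b⁆ a) (n : ℕ) :
    ⁅a ^ n, b⁆ = ⁅a, b⁆ ^ n := by
  have h' : Commute ⁅b, a⁆ a := by simpa only [commutatorElement_inv] using h.inv_left
  rw [← commutatorElement_inv, commutatorElement_pow_right h', ← inv_pow, commutatorElement_inv]

lemma pow_mem_center_of_commute_pow {a : G} {n : ℕ} (hpow : ∀ g, Commute a (g ^ n))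
    (hcomm : ∀ g, ⁅a, g⁆ ∈ Subgroup.center G) : a ^ n ∈ Subgroup.center G := by
  refine Subgroup.mem_center_iff.mpr fun g => ?_
  have hcentral (x : G) : Commute ⁅a, g⁆ x := (Subgroup.mem_center_iff.mp (hcomm g) x).symm
  have : ⁅a ^ n, g⁆ = 1 :=
    calc ⁅a ^ n, g⁆ = ⁅a, g⁆ ^ n := commutatorElement_pow_left (hcentral a) n
      _ = ⁅a, g ^ n⁆ := (commutatorElement_pow_right (hcentral g) n).symm
      _ = 1 := (hpow g).commutator_eq
  exact (commutatorElement_eq_one_iff_mul_comm.mp this).symm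

lemma exists_pow_pow_mem_center_of_commute_pow [Group.IsNilpotent G] {n : ℕ} {a : G}
    (ha : ∀ g, Commute a (g ^ n)) : ∃ k : ℕ, a ^ n ^ k ∈ Subgroup.center G := by
  refine Group.nilpotent_center_quotient_ind
    (P := fun G _ _ => ∀ a : G, (∀ g, Commute a (g ^ n)) → ∃ k : ℕ, a ^ n ^ k ∈ Subgroup.center G)
    G (fun G _ _ a _ => ⟨0, Subsingleton.elim 1 (a ^ n ^ 0) ▸ Subgroup.one_mem _⟩) ?_ a ha
  intro G _ _ ih a ha
  obtain ⟨k, hk⟩ := ih (a : G ⧸ Subgroup.center G) (QuotientGroup.mk_surjective.forall.mpr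
    fun g => (ha g).map (QuotientGroup.mk' (Subgroup.center G)))
  have hcomm (g : G) : ⁅a ^ n ^ k, g⁆ ∈ Subgroup.center G := by
    rw [← QuotientGroup.ker_mk' (Subgroup.center G), MonoidHom.mem_ker, map_commutatorElement,
      commutatorElement_eq_one_iff_mul_comm]
    exact (Subgroup.mem_center_iff.mp hk _).symm
  refine ⟨k + 1, ?_⟩
  rw [pow_succ, pow_mul]
  exact pow_mem_center_of_commute_pow (fun g => (ha g).pow_left _) hcomm

end CentralPowers

section Cosets

variable {G : Type*} [Group G] {A B : Subgroup G}

open scoped Pointwise in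
lemma finite_cosetsIn_of_relIndex_ne_zero (h : A.relIndex B ≠ 0) :
    (cosetsIn (A : Set G) (B : Set G)).Finite := by
  have : (A.subgroupOf B).FiniteIndex := ⟨h⟩
  let coset : B ⧸ A.subgroupOf B → Set G := Quotient.lift (fun b : B => (b : G) • (A : Set G))
    fun b c hbc => (leftCoset_eq_iff A).mpr <|
      Subgroup.mem_subgroupOf.mp (QuotientGroup.leftRel_apply.mp hbc)
  refine (Set.finite_range coset).subset ?_
  rintro _ ⟨b, hb, rfl⟩
  exact ⟨((⟨b, hb⟩ : B) : B ⧸ A.subgroupOf B), rfl⟩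

open scoped IsMulCommutative in
lemma relIndex_ne_zero_of_fg_of_pow_mem [IsMulCommutative B] (hB : B.FG)
    (hpow : ∀ b ∈ B, ∃ m, 0 < m ∧ b ^ m ∈ A) : A.relIndex B ≠ 0 := by
  have : Group.FG B := (Group.fg_iff_subgroup_fg B).mpr hB
  have htorsion : IsMulTorsion (B ⧸ A.subgroupOf B) := by
    refine QuotientGroup.mk_surjective.forall.mpr fun b => ?_
    obtain ⟨m, hm, hbm⟩ := hpow b b.2
    exact isOfFinOrder_iff_pow_eq_one.mpr ⟨m, hm, (QuotientGroup.eq_one_iff (b ^ m)).mpr hbm⟩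
  have : Finite (B ⧸ A.subgroupOf B) := CommGroup.finite_of_fg_isMulTorsion _ htorsion
  exact Subgroup.index_ne_zero_of_finite

end Cosets

lemma twistedCenter_inter_subset_twistedCenter_subgroup {G : Type*} [Group G]
    (σ : G → G → Circle) (N : Subgroup G) :
    twistedCenter σ ∩ (N : Set G) ⊆ Subtype.val '' twistedCenter (fun x y : N => σ x y) := by
  rintro g ⟨⟨hg, hσg⟩, hgN⟩
  have hcenter : (⟨g, hgN⟩ : N) ∈ Subgroup.center N :=
    Subgroup.mem_center_iff.mpr fun h => Subtype.ext (Subgroup.mem_center_iff.mp hg h)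
  exact ⟨⟨g, hgN⟩, ⟨hcenter, fun h => hσg h⟩, rfl⟩

lemma IsTwoCocycle.comp {G H : Type*} [Group G] [Group H] {σ : G → G → Circle}
    (hσ : IsTwoCocycle σ) (f : H →* G) : IsTwoCocycle fun x y => σ (f x) (f y) :=
  ⟨fun x => by simp only [map_one, hσ.1], fun x => by simp only [map_one, hσ.2.1],
    fun x y z => by simp only [map_mul, hσ.2.2]⟩

/-- The central extension of `G` by the circle group defined by a 2-cocycle `σ`: the set `𝕋 × G`
with product `(a, g) (b, h) = (a b σ(g,h), g h)`.  The proof that `σ` is a cocycle is a parameter of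
the type so that the group structure can be an instance. -/
@[ext]
structure CocycleExtension {G : Type*} [Group G] {σ : G → G → Circle} (hσ : IsTwoCocycle σ) where
  phase : Circle
  base : G

namespace CocycleExtension

variable {G : Type*} [Group G] {σ : G → G → Circle} {hσ : IsTwoCocycle σ}

noncomputable instance : Mul (CocycleExtension hσ) :=
  ⟨fun x y => ⟨x.phase * y.phase * σ x.base y.base, x.base * y.base⟩⟩

noncomputable instance : One (CocycleExtension hσ) :=
  ⟨⟨1, 1⟩⟩

noncomputable instance : Inv (CocycleExtension hσ) :=
  ⟨fun x => ⟨x.phase⁻¹ * (σ x.base⁻¹ x.base)⁻¹, x.base⁻¹⟩⟩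

lemma mul_phase (x y : CocycleExtension hσ) :
    (x * y).phase = x.phase * y.phase * σ x.base y.base :=
  rfl

lemma mul_base (x y : CocycleExtension hσ) : (x * y).base = x.base * y.base :=
  rfl

lemma mul_assoc_phase (x y z : CocycleExtension hσ) :
    (x * y * z).phase = (x * (y * z)).phase := by
  obtain ⟨a, g⟩ := x
  obtain ⟨b, h⟩ := y
  obtain ⟨c, k⟩ := z
  calc a * b * σ g h * c * σ (g * h) k = a * b * c * (σ g h * σ (g * h) k) := by ac_rfl
    _ = a * b * c * (σ h k * σ g (h * k)) := by rw [hσ.2.2]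
    _ = a * (b * c * σ h k) * σ g (h * k) := by ac_rfl

noncomputable instance : Group (CocycleExtension hσ) :=
  Group.ofLeftAxioms
    (fun x y z => CocycleExtension.ext (mul_assoc_phase x y z) (mul_assoc _ _ _))
    (fun x => CocycleExtension.ext
      (show 1 * x.phase * σ 1 x.base = x.phase by rw [hσ.2.1, one_mul, mul_one]) (one_mul _))
    (fun x => CocycleExtension.ext
      (show x.phase⁻¹ * (σ x.base⁻¹ x.base)⁻¹ * x.phase * σ x.base⁻¹ x.base = 1 by
        rw [mul_right_comm, inv_mul_cancel_right, inv_mul_cancel])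
      (inv_mul_cancel _))

/-- The projection of the central extension onto `G`. -/
noncomputable def proj (hσ : IsTwoCocycle σ) : CocycleExtension hσ →* G where
  toFun := base
  map_one' := rfl
  map_mul' _ _ := rfl

lemma commute_iff {x y : CocycleExtension hσ} :
    Commute x y ↔ Commute x.base y.base ∧ σ x.base y.base = σ y.base x.base := by
  rw [commute_iff_eq, CocycleExtension.ext_iff, mul_phase, mul_phase, mul_comm y.phase,
    mul_right_inj, mul_base, mul_base, and_comm, commute_iff_eq]

lemma mem_center_iff {x : CocycleExtension hσ} :
    x ∈ Subgroup.center (CocycleExtension hσ) ↔ x.base ∈ twistedCenter σ := by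
  constructor
  · intro hx
    have hcomm (g : G) : Commute x.base g ∧ σ x.base g = σ g x.base :=
      commute_iff.mp (Subgroup.mem_center_iff.mp hx ⟨1, g⟩).symm
    exact ⟨Subgroup.mem_center_iff.mpr fun g => (hcomm g).1.symm, fun g => (hcomm g).2⟩
  · rintro ⟨hcenter, hσx⟩
    exact Subgroup.mem_center_iff.mpr fun y =>
      (commute_iff.mpr ⟨(Subgroup.mem_center_iff.mp hcenter y.base).symm, hσx y.base⟩).symm

lemma ker_proj_le_center (hσ : IsTwoCocycle σ) :
    (proj hσ).ker ≤ Subgroup.center (CocycleExtension hσ) := by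
  intro x (hx : x.base = 1)
  rw [mem_center_iff, hx]
  exact ⟨Subgroup.one_mem _, fun h => by rw [hσ.1, hσ.2.1]⟩

instance [Group.IsNilpotent G] : Group.IsNilpotent (CocycleExtension hσ) :=
  Subgroup.isNilpotent_of_ker_le_center (proj hσ) (ker_proj_le_center hσ)

lemma commute_of_base_mem_twistedCenter_subgroup {N : Subgroup G} {x y : CocycleExtension hσ}
    (hx : x.base ∈ Subtype.val '' twistedCenter (fun x y : N => σ x y)) (hy : y.base ∈ N) :
    Commute x y := by
  obtain ⟨g, ⟨hcenter, hσg⟩, hgx⟩ := hx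
  rw [commute_iff, ← hgx]
  exact ⟨congrArg Subtype.val (Subgroup.mem_center_iff.mp hcenter ⟨y.base, hy⟩).symm,
    hσg ⟨y.base, hy⟩⟩

end CocycleExtension

section TwistedCenter

variable {G : Type*} [Group G] {σ : G → G → Circle}

/-- The twisted center `Z(G,σ)` as a subgroup of `G`, realised as the image of the center of the
central extension defined by `σ`. -/
noncomputable def twistedCenterSubgroup (hσ : IsTwoCocycle σ) : Subgroup G :=
  (Subgroup.center (CocycleExtension hσ)).map (CocycleExtension.proj hσ)

instance (hσ : IsTwoCocycle σ) : IsMulCommutative (twistedCenterSubgroup hσ) :=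
  inferInstanceAs (IsMulCommutative (Subgroup.map _ (Subgroup.center _)))

lemma coe_twistedCenterSubgroup (hσ : IsTwoCocycle σ) :
    (twistedCenterSubgroup hσ : Set G) = twistedCenter σ := by
  ext g
  constructor
  · rintro ⟨x, hx, rfl⟩
    exact CocycleExtension.mem_center_iff.mp hx
  · intro hg
    exact ⟨⟨1, g⟩, CocycleExtension.mem_center_iff.mpr hg, rfl⟩

lemma exists_pow_mem_twistedCenter [Group.IsNilpotent G] (hσ : IsTwoCocycle σ) {N : Subgroup G}
    (hN : N.index ≠ 0) {g : G}
    (hg : g ∈ Subtype.val '' twistedCenter (fun x y : N => σ x y)) :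
    ∃ m, 0 < m ∧ g ^ m ∈ twistedCenter σ := by
  set n := N.index.factorial
  let x : CocycleExtension hσ := ⟨1, g⟩
  have hpow (h : G) : h ^ n ∈ N :=
    N.pow_mem_of_index_ne_zero_of_dvd hN h fun _ => Nat.dvd_factorial
  have hx (e : CocycleExtension hσ) : Commute x (e ^ n) := by
    apply CocycleExtension.commute_of_base_mem_twistedCenter_subgroup hg
    change CocycleExtension.proj hσ (e ^ n) ∈ N
    rw [map_pow]
    exact hpow _
  obtain ⟨k, hk⟩ := exists_pow_pow_mem_center_of_commute_pow hx
  refine ⟨n ^ k, pow_pos N.index.factorial_pos k, ?_⟩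
  have hbase : (x ^ n ^ k).base = g ^ n ^ k := map_pow (CocycleExtension.proj hσ) x _
  rw [← hbase]
  exact CocycleExtension.mem_center_iff.mp hk

end TwistedCenter

theorem twistedCenter_inter_finiteIndex_in_twistedCenter_of_subgroup_general
    (G : Type*) [Group G] [Group.IsNilpotent G] [Group.FG G]
    (σ : G → G → Circle) (hσ : IsTwoCocycle σ) (N : Subgroup G) (hN : N.index ≠ 0) :
    twistedCenter σ ∩ (N : Set G) ⊆
        Subtype.val '' twistedCenter (fun x y : N => σ x y) ∧
      (cosetsIn (twistedCenter σ ∩ (N : Set G))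
        (Subtype.val '' twistedCenter (fun x y : N => σ x y))).Finite := by
  refine ⟨twistedCenter_inter_subset_twistedCenter_subgroup σ N, ?_⟩
  let A : Subgroup G := twistedCenterSubgroup hσ ⊓ N
  let B : Subgroup G := (twistedCenterSubgroup (hσ.comp N.subtype)).map N.subtype
  have hA : (A : Set G) = twistedCenter σ ∩ N := by
    rw [Subgroup.coe_inf, coe_twistedCenterSubgroup]
  have hB : (B : Set G) = Subtype.val '' twistedCenter (fun x y : N => σ x y) := by
    rw [Subgroup.coe_map, coe_twistedCenterSubgroup]
    rfl
  have hpow : ∀ b ∈ B, ∃ m, 0 < m ∧ b ^ m ∈ A := by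
    intro b hb
    obtain ⟨m, hm, hbm⟩ := exists_pow_mem_twistedCenter hσ hN (hB.subset hb)
    rw [← coe_twistedCenterSubgroup hσ] at hbm
    exact ⟨m, hm, hbm, N.pow_mem (Subgroup.map_subtype_le _ hb) m⟩
  rw [← hA, ← hB]
  exact finite_cosetsIn_of_relIndex_ne_zero
    (relIndex_ne_zero_of_fg_of_pow_mem (IsNoetherianGroup.of_isNilpotent G B) hpow)

/-- Let `G` be a finitely generated nilpotent group, `σ` a 2-cocycle on
`G` and `N` a normal subgroup of finite index.  Then `Z(G,σ) ∩ N ⊆ Z(N, σ|_N)` and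
`Z(G,σ) ∩ N` has finite index in `Z(N, σ|_N)` (both viewed inside `G`). -/
theorem twistedCenter_inter_finiteIndex_in_twistedCenter_of_subgroup
    (G : Type*) [Group G] [Group.IsNilpotent G] [Group.FG G]
    (σ : G → G → Circle) (hσ : IsTwoCocycle σ)
    (N : Subgroup G) [N.Normal] (hN : N.index ≠ 0) :
    twistedCenter σ ∩ (N : Set G) ⊆
        Subtype.val '' twistedCenter (fun x y : N => σ x y) ∧
      (cosetsIn (twistedCenter σ ∩ (N : Set G))
        (Subtype.val '' twistedCenter (fun x y : N => σ x y))).Finite :=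
  twistedCenter_inter_finiteIndex_in_twistedCenter_of_subgroup_general G σ hσ N hN
end

section
/- Let G be a discrete group, N a central subgroup of G, ω a 2-cocycle on G/N, γ : N → 𝕋 a group homomorphism, c : G/N → G a section of the quotient map with c(e) = e, and let ω_γ(g,h) = γ(c(g)c(h)c(gh)⁻¹)ω(g,h). Then for every g ∈ G/N that is central in G/N and every h ∈ G/N, the commutator c(g)c(h)c(g)⁻¹c(h)⁻¹ lies in N and ω_γ(g,h)ω_γ(h,g)⁻¹ = γ(c(g)c(h)c(g)⁻¹c(h)⁻¹)·ω(g,h)ω(h,g)⁻¹. Consequently, a central element g of G/N lies in Z(G/N, ω_γ) if and only if γ(c(g)c(h)c(g)⁻¹c(h)⁻¹)·ω(g,h)ω(h,g)⁻¹ = 1 for all h ∈ G/N. -/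
open scoped Classical

/-- The extension of a homomorphism `γ : N → 𝕋` to all of `G`, sending elements outside
of `N` to `1`.  It is only ever applied to elements of `N`. -/
noncomputable def liftHom {G : Type*} [Group G] {N : Subgroup G} (γ : N →* Circle) :
    G → Circle :=
  fun g => if h : g ∈ N then γ ⟨g, h⟩ else 1

/-!
For commuting `g`, `h` in `G ⧸ N` we have `c(gh) = c(hg)`, so the arguments `c(g)c(h)c(gh)⁻¹` and
`c(h)c(g)c(hg)⁻¹` of `γ` differ by the commutator `c(g)c(h)c(g)⁻¹c(h)⁻¹`, which lies in `N` since
it maps to the trivial commutator of `g` and `h`. As `γ` is multiplicative on `N`, it follows that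
`ω_γ(g, h)ω_γ(h, g)⁻¹` is `γ` of this commutator times `ω(g, h)ω(h, g)⁻¹`.
-/

section

open scoped commutatorElement

variable {G : Type*} [Group G]

theorem mem_twistedCenter_iff_of_mem_center {σ : G → G → Circle} {g : G}
    (hg : g ∈ Subgroup.center G) :
    g ∈ twistedCenter σ ↔ ∀ h, σ g h * (σ h g)⁻¹ = 1 := by
  simp only [twistedCenter, Set.mem_ofPred_eq, hg, true_and, mul_inv_eq_one]

theorem mul_mul_inv_eq_commutatorElement_mul (x y z : G) :
    x * y * z⁻¹ = ⁅x, y⁆ * (y * x * z⁻¹) := by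
  rw [commutatorElement_def]
  group

variable {N : Subgroup G}

theorem liftHom_of_mem (γ : N →* Circle) {x : G} (hx : x ∈ N) :
    liftHom γ x = γ ⟨x, hx⟩ :=
  dif_pos hx

theorem liftHom_mul (γ : N →* Circle) {x y : G} (hx : x ∈ N) (hy : y ∈ N) :
    liftHom γ (x * y) = liftHom γ x * liftHom γ y := by
  rw [liftHom_of_mem γ hx, liftHom_of_mem γ hy, liftHom_of_mem γ (N.mul_mem hx hy),
    ← map_mul, MulMemClass.mk_mul_mk]

variable [N.Normal]

theorem commutatorElement_mem_iff_commute_mk {x y : G} :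
    ⁅x, y⁆ ∈ N ↔ Commute (x : G ⧸ N) (y : G ⧸ N) := by
  have mk_commutator : ((⁅x, y⁆ : G) : G ⧸ N) = ⁅(x : G ⧸ N), (y : G ⧸ N)⁆ :=
    map_commutatorElement (QuotientGroup.mk' N) x y
  rw [← QuotientGroup.eq_one_iff, mk_commutator, commutatorElement_eq_one_iff_commute]

/-- The twist `ω_γ(g, h) = γ(c(g)c(h)c(gh)⁻¹)ω(g, h)` of a function `ω` on pairs of elements of
`G ⧸ N` by a homomorphism `γ` on `N` and a map `c : G ⧸ N → G`. When `c` is a section of the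
quotient map, `c(g)c(h)c(gh)⁻¹` lies in `N`, so the junk value of `liftHom` does not occur. -/
noncomputable def cocycleOfSection (ω : G ⧸ N → G ⧸ N → Circle) (γ : N →* Circle)
    (c : G ⧸ N → G) (g h : G ⧸ N) : Circle :=
  liftHom γ (c g * c h * (c (g * h))⁻¹) * ω g h

variable {c : G ⧸ N → G}

theorem section_mul_mul_inv_mem (hc : ∀ x : G ⧸ N, QuotientGroup.mk (c x) = x) (g h : G ⧸ N) :
    c g * c h * (c (g * h))⁻¹ ∈ N := by
  rw [← div_eq_mul_inv, ← QuotientGroup.eq_iff_div_mem, QuotientGroup.mk_mul, hc, hc, hc]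

variable {g h : G ⧸ N}

theorem commutatorElement_section_mem (hc : ∀ x : G ⧸ N, QuotientGroup.mk (c x) = x)
    (hgh : Commute g h) : ⁅c g, c h⁆ ∈ N := by
  rwa [commutatorElement_mem_iff_commute_mk, hc, hc]

theorem liftHom_section_mul_mul_inv_comm (hc : ∀ x : G ⧸ N, QuotientGroup.mk (c x) = x)
    (γ : N →* Circle) (hgh : Commute g h) :
    liftHom γ (c g * c h * (c (g * h))⁻¹) =
      liftHom γ ⁅c g, c h⁆ * liftHom γ (c h * c g * (c (h * g))⁻¹) := by
  rw [mul_mul_inv_eq_commutatorElement_mul, hgh.eq]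
  exact liftHom_mul γ (commutatorElement_section_mem hc hgh) (section_mul_mul_inv_mem hc h g)

theorem cocycleOfSection_mul_inv_swap (hc : ∀ x : G ⧸ N, QuotientGroup.mk (c x) = x)
    (ω : G ⧸ N → G ⧸ N → Circle) (γ : N →* Circle) (hgh : Commute g h) :
    cocycleOfSection ω γ c g h * (cocycleOfSection ω γ c h g)⁻¹ =
      liftHom γ ⁅c g, c h⁆ * (ω g h * (ω h g)⁻¹) := by
  rw [cocycleOfSection, cocycleOfSection, liftHom_section_mul_mul_inv_comm hc γ hgh,
    ← div_eq_mul_inv, mul_assoc, mul_div_assoc, mul_div_mul_left_eq_div, div_eq_mul_inv]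

theorem twistedCenter_cocycleOfSection_iff_general
    (hc : ∀ x : G ⧸ N, QuotientGroup.mk (c x) = x)
    (ω : G ⧸ N → G ⧸ N → Circle) (γ : N →* Circle) :
    (∀ g h : G ⧸ N, Commute g h →
        ⁅c g, c h⁆ ∈ N ∧
        cocycleOfSection ω γ c g h * (cocycleOfSection ω γ c h g)⁻¹ =
          liftHom γ ⁅c g, c h⁆ * (ω g h * (ω h g)⁻¹)) ∧
      ∀ g ∈ Subgroup.center (G ⧸ N),
        (g ∈ twistedCenter (cocycleOfSection ω γ c) ↔
          ∀ h : G ⧸ N, liftHom γ ⁅c g, c h⁆ * (ω g h * (ω h g)⁻¹) = 1) := by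
  refine ⟨fun g h hgh => ⟨commutatorElement_section_mem hc hgh,
    cocycleOfSection_mul_inv_swap hc ω γ hgh⟩, fun g hg => ?_⟩
  have hcomm (h : G ⧸ N) : Commute g h := (Subgroup.mem_center_iff.mp hg h).symm
  simp only [mem_twistedCenter_iff_of_mem_center hg,
    cocycleOfSection_mul_inv_swap hc ω γ (hcomm _)]

end

/-- Let `N` be a central subgroup of `G`, `ω` a 2-cocycle on `G/N`,
`γ : N → 𝕋` a homomorphism, `c : G/N → G` a section of the quotient map with `c(e) = e`,
and `ω_γ(g,h) = γ(c(g)c(h)c(gh)⁻¹)ω(g,h)`.  Then for every central `g ∈ G/N` and every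
`h ∈ G/N` the commutator `c(g)c(h)c(g)⁻¹c(h)⁻¹` lies in `N` and
`ω_γ(g,h)ω_γ(h,g)⁻¹ = γ(c(g)c(h)c(g)⁻¹c(h)⁻¹)·ω(g,h)ω(h,g)⁻¹`; consequently a central
element `g` of `G/N` lies in `Z(G/N, ω_γ)` if and only if
`γ(c(g)c(h)c(g)⁻¹c(h)⁻¹)·ω(g,h)ω(h,g)⁻¹ = 1` for all `h`. -/
theorem twistedCenter_cocycleOfSection_iff
    (G : Type*) [Group G] (N : Subgroup G) [N.Normal] (hcentral : N ≤ Subgroup.center G)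
    (ω : G ⧸ N → G ⧸ N → Circle) (hω : IsTwoCocycle ω)
    (γ : N →* Circle)
    (c : G ⧸ N → G) (hc : ∀ x : G ⧸ N, QuotientGroup.mk (c x) = x) (hc1 : c 1 = 1) :
    (∀ g ∈ Subgroup.center (G ⧸ N), ∀ h : G ⧸ N,
        c g * c h * (c g)⁻¹ * (c h)⁻¹ ∈ N ∧
        (liftHom γ (c g * c h * (c (g * h))⁻¹) * ω g h) *
            (liftHom γ (c h * c g * (c (h * g))⁻¹) * ω h g)⁻¹ =
          liftHom γ (c g * c h * (c g)⁻¹ * (c h)⁻¹) * (ω g h * (ω h g)⁻¹)) ∧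
      ∀ g ∈ Subgroup.center (G ⧸ N),
        (g ∈ twistedCenter (fun g h : G ⧸ N =>
            liftHom γ (c g * c h * (c (g * h))⁻¹) * ω g h) ↔
          ∀ h : G ⧸ N,
            liftHom γ (c g * c h * (c g)⁻¹ * (c h)⁻¹) * (ω g h * (ω h g)⁻¹) = 1) :=
  (twistedCenter_cocycleOfSection_iff_general hc ω γ).imp_left
    fun key g hg h => key g h (Subgroup.mem_center_iff.mp hg h).symm
end

section
/- Let G be a discrete abelian group, σ a 2-cocycle on G, and set N = Z(G,σ). Let ω be a 2-cocycle on G/N such that the inflation Inf(ω) is cohomologous to σ. Then for every group homomorphism γ : N → 𝕋 and every section c : G/N → G of the quotient map with c(e) = e, the twisted center of G/N with respect to the 2-cocycle ω_γ(g,h) = γ(c(g)c(h)c(gh)⁻¹)ω(g,h) is trivial: Z(G/N, ω_γ) = {e}. -/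
open scoped Classical

/-!
The twisted center does not change when the cocycle is multiplied by a function that is symmetric
against central elements. Coboundaries are such functions, and so is `γ(c(g)c(h)c(gh)⁻¹)` when `G`
is abelian. Since moreover the twisted center of `Inf(ω)` is the preimage of the twisted center of
`ω`, the preimage of `Z(G/N, ω_γ)` in `G` is `Z(G, Inf(ω)) = Z(G, σ) = N`, the preimage of `{e}`.
-/

section TwistedCenter

variable {G H : Type*} [Group G] [Group H]

/-- The coboundary `∂φ(g,h) = φ(g)⁻¹φ(h)⁻¹φ(gh)`, without the normalization `φ(e) = 1`. -/
noncomputable def coboundary (φ : G → Circle) : G → G → Circle :=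
  fun g h => (φ g)⁻¹ * (φ h)⁻¹ * φ (g * h)

/-- The inflation `Inf(ω) = ω ∘ (f × f)` to `G` of a function `ω` on `H × H`, along an arbitrary
homomorphism `f : G →* H` in place of a quotient map. -/
def inflation (f : G →* H) (ω : H → H → Circle) : G → G → Circle :=
  fun g h => ω (f g) (f h)

theorem coboundary_comm_of_mem_center (φ : G → Circle) {g : G} (hg : g ∈ Subgroup.center G)
    (h : G) : coboundary φ g h = coboundary φ h g := by
  rw [coboundary, coboundary, mul_comm (φ g)⁻¹, Subgroup.mem_center_iff.mp hg h]

theorem twistedCenter_mul_of_symm {s : G → G → Circle}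
    (hs : ∀ g ∈ Subgroup.center G, ∀ h, s g h = s h g) (σ : G → G → Circle) :
    twistedCenter (s * σ) = twistedCenter σ := by
  ext g
  refine and_congr_right fun hg => forall_congr' fun h => ?_
  simp only [Pi.mul_apply, hs g hg h, mul_right_inj]

theorem twistedCenter_mul_coboundary (σ : G → G → Circle) (φ : G → Circle) :
    twistedCenter (σ * coboundary φ) = twistedCenter σ := by
  rw [mul_comm, twistedCenter_mul_of_symm fun _ => coboundary_comm_of_mem_center φ]

theorem center_le_comap_center {f : G →* H} (hf : Function.Surjective f) :
    Subgroup.center G ≤ (Subgroup.center H).comap f := fun g hg => by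
  rw [Subgroup.mem_comap, Subgroup.mem_center_iff, hf.forall]
  intro h
  rw [← map_mul, Subgroup.mem_center_iff.mp hg h, map_mul]

theorem twistedCenter_inflation {f : G →* H} (hf : Function.Surjective f)
    (hcenter : (Subgroup.center H).comap f ≤ Subgroup.center G) (ω : H → H → Circle) :
    twistedCenter (inflation f ω) = f ⁻¹' twistedCenter ω := by
  ext g
  have mem_center_iff : g ∈ Subgroup.center G ↔ f g ∈ Subgroup.center H :=
    ⟨fun hg => center_le_comap_center hf hg, fun hg => hcenter hg⟩
  exact and_congr mem_center_iff (hf.forall (p := fun y => ω (f g) y = ω y (f g))).symm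

end TwistedCenter

theorem twistedCenter_quotient_by_twistedCenter_trivial_general
    {G : Type*} [Group G] {σ : G → G → Circle} {N : Subgroup G} [N.Normal]
    (hN : (N : Set G) = twistedCenter σ)
    (hcenter : (Subgroup.center (G ⧸ N)).comap (QuotientGroup.mk' N) ≤ Subgroup.center G)
    {ω : G ⧸ N → G ⧸ N → Circle} {φ : G → Circle}
    (hφ : inflation (QuotientGroup.mk' N) ω = σ * coboundary φ)
    {s : G ⧸ N → G ⧸ N → Circle}
    (hs : ∀ x ∈ Subgroup.center (G ⧸ N), ∀ y, s x y = s y x) :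
    twistedCenter (s * ω) = {1} := by
  have hsurj : Function.Surjective (QuotientGroup.mk' N) := QuotientGroup.mk'_surjective N
  apply hsurj.preimage_injective
  calc QuotientGroup.mk' N ⁻¹' twistedCenter (s * ω)
      = QuotientGroup.mk' N ⁻¹' twistedCenter ω := by rw [twistedCenter_mul_of_symm hs]
    _ = twistedCenter (inflation (QuotientGroup.mk' N) ω) :=
        (twistedCenter_inflation hsurj hcenter ω).symm
    _ = twistedCenter σ := by rw [hφ, twistedCenter_mul_coboundary]
    _ = N := hN.symm
    _ = QuotientGroup.mk' N ⁻¹' {1} := (QuotientGroup.preimage_mk_one N).symm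

/-- Let `G` be a discrete abelian group, `σ` a 2-cocycle on `G`, and
`N = Z(G,σ)` the twisted center (a subgroup).  Let `ω` be a 2-cocycle on `G/N` whose
inflation is cohomologous to `σ`.  Then for every homomorphism `γ : N → 𝕋` and every
section `c : G/N → G` of the quotient map with `c(e) = e`, the twisted center of `G/N`
with respect to `ω_γ(g,h) = γ(c(g)c(h)c(gh)⁻¹)ω(g,h)` is trivial. -/
theorem twistedCenter_quotient_by_twistedCenter_trivial
    (G : Type*) [CommGroup G] (σ : G → G → Circle) (hσ : IsTwoCocycle σ)
    (N : Subgroup G) (hN : (N : Set G) = twistedCenter σ)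
    (ω : G ⧸ N → G ⧸ N → Circle) (hω : IsTwoCocycle ω)
    (hinf : ∃ φ : G → Circle, φ 1 = 1 ∧
      ∀ g h : G, ω (QuotientGroup.mk g) (QuotientGroup.mk h) =
        σ g h * ((φ g)⁻¹ * (φ h)⁻¹ * φ (g * h)))
    (γ : N →* Circle)
    (c : G ⧸ N → G) (hc : ∀ x : G ⧸ N, QuotientGroup.mk (c x) = x) (hc1 : c 1 = 1) :
    twistedCenter (fun g h : G ⧸ N =>
        liftHom γ (c g * c h * (c (g * h))⁻¹) * ω g h) = {1} := by
  obtain ⟨φ, -, hφ⟩ := hinf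
  exact twistedCenter_quotient_by_twistedCenter_trivial_general hN
    (CommGroup.center_eq_top (G := G) ▸ le_top) (funext₂ hφ)
    fun x _ y => by rw [mul_comm (c x), mul_comm x]
end

section
/- Let M be a discrete abelian group, D a subgroup of M, and σ a 2-cocycle on M such that σ(d,m) = σ(m,d) for all d ∈ D and m ∈ M. Let c : M/D → M be a section of the quotient map with c(e) = e, and define τ(g,h) = σ(c(g),c(h))·σ(c(g)c(h)c(gh)⁻¹, c(gh))⁻¹ for g,h ∈ M/D. Then D ⊆ Z(M,σ), the set Z(M/D,τ) := {g ∈ M/D : τ(g,h) = τ(h,g) for all h ∈ M/D} equals the image of Z(M,σ) under the quotient map M → M/D, and the index of Z(M/D,τ) in M/D equals the index of Z(M,σ) in M. -/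
/-!
The antisymmetrization `σ(g,h) / σ(h,g)` of a 2-cocycle is multiplicative in each variable on
commuting elements, so on `M` it only depends on classes modulo `D ⊆ Z(M,σ)`. The correction
factor in `τ` is symmetric and hence disappears under antisymmetrization: the antisymmetrization of
`σ` is that of `τ` pulled back along `M → M/D`. Therefore `Z(M,σ)` is the full preimage of
`Z(M/D,τ)`, and both the image and the index statements follow from surjectivity of `M → M/D`.
-/

/-- The antisymmetrization `(g,h) ↦ σ(g,h) / σ(h,g)`, which measures how far `σ` is from being
symmetric. For a 2-cocycle `σ` and commuting `g`, `h`, it is the commutator of the corresponding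
unitaries of the `σ`-twisted group algebra. -/
def antisymmetrization {G A : Type*} [Div A] (σ : G → G → A) (g h : G) : A :=
  σ g h / σ h g

section Antisymmetrization

variable {G A : Type*} [Group A] {σ : G → G → A}

theorem antisymmetrization_eq_one_iff {g h : G} :
    antisymmetrization σ g h = 1 ↔ σ g h = σ h g :=
  div_eq_one

theorem inv_antisymmetrization (σ : G → G → A) (g h : G) :
    (antisymmetrization σ g h)⁻¹ = antisymmetrization σ h g :=
  inv_div _ _

end Antisymmetrization

section TwistedCenter

variable {G : Type*} [Group G] {σ : G → G → Circle}

theorem IsTwoCocycle.antisymmetrization_mul_left (hσ : IsTwoCocycle σ) {g h k : G}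
    (hgk : Commute g k) (hhk : Commute h k) :
    antisymmetrization σ (g * h) k = antisymmetrization σ g k * antisymmetrization σ h k := by
  obtain ⟨-, -, cocycle⟩ := hσ
  have cocycle_ghk : σ g h * σ (g * h) k = σ h k * σ g (h * k) := cocycle g h k
  have cocycle_gkh : σ g k * σ (g * k) h = σ k h * σ g (h * k) := by
    rw [hhk.eq]; exact cocycle g k h
  have cocycle_kgh : σ k g * σ (g * k) h = σ g h * σ k (g * h) := by
    rw [hgk.eq]; exact cocycle k g h
  simp only [antisymmetrization]
  rw [div_mul_div_comm, div_eq_div_iff_mul_eq_mul]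
  apply mul_left_cancel (a := σ g h * σ (g * k) h)
  calc σ g h * σ (g * k) h * (σ (g * h) k * (σ k g * σ k h))
      = (σ g h * σ (g * h) k) * (σ k g * σ (g * k) h) * σ k h := by ac_rfl
    _ = (σ h k * σ g (h * k)) * (σ g h * σ k (g * h)) * σ k h := by rw [cocycle_ghk, cocycle_kgh]
    _ = (σ k h * σ g (h * k)) * (σ g h * σ k (g * h)) * σ h k := by ac_rfl
    _ = (σ g k * σ (g * k) h) * (σ g h * σ k (g * h)) * σ h k := by rw [cocycle_gkh]
    _ = σ g h * σ (g * k) h * (σ g k * σ h k * σ k (g * h)) := by ac_rfl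

theorem IsTwoCocycle.antisymmetrization_mul_left_of_mem_twistedCenter (hσ : IsTwoCocycle σ)
    {g z k : G} (hz : z ∈ twistedCenter σ) (hgk : Commute g k) :
    antisymmetrization σ (g * z) k = antisymmetrization σ g k := by
  have hzk : Commute z k := (Subgroup.mem_center_iff.mp hz.1 k).symm
  rw [hσ.antisymmetrization_mul_left hgk hzk,
    antisymmetrization_eq_one_iff.mpr (hz.2 k), mul_one]

end TwistedCenter

section CommGroup

variable {M : Type*} [CommGroup M]

theorem mem_twistedCenter_iff {σ : M → M → Circle} {g : M} :
    g ∈ twistedCenter σ ↔ ∀ h, σ g h = σ h g := by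
  simp [twistedCenter, CommGroup.center_eq_top]

theorem mem_twistedCenter_iff_antisymmetrization {σ : M → M → Circle} {g : M} :
    g ∈ twistedCenter σ ↔ ∀ h, antisymmetrization σ g h = 1 := by
  simp only [mem_twistedCenter_iff, antisymmetrization_eq_one_iff]

variable {D : Subgroup M}

/-- The function `τ(g,h) = σ(c(g),c(h)) σ(c(g)c(h)c(gh)⁻¹,c(gh))⁻¹` on `M/D` induced by `σ` and a
map `c : M/D → M`, usually a section of the quotient map. -/
def quotientCocycle {A : Type*} [Group A] (σ : M → M → A) (c : M ⧸ D → M) (g h : M ⧸ D) : A :=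
  σ (c g) (c h) * (σ (c g * c h * (c (g * h))⁻¹) (c (g * h)))⁻¹

theorem antisymmetrization_quotientCocycle {A : Type*} [Group A] (σ : M → M → A)
    (c : M ⧸ D → M) (g h : M ⧸ D) :
    antisymmetrization (quotientCocycle σ c) g h = antisymmetrization σ (c g) (c h) := by
  simp only [antisymmetrization, quotientCocycle]
  rw [mul_comm h g, mul_comm (c h) (c g), mul_div_mul_right_eq_div]

variable {σ : M → M → Circle} {c : M ⧸ D → M}

theorem IsTwoCocycle.antisymmetrization_congr_left (hσ : IsTwoCocycle σ)
    (hD : (D : Set M) ⊆ twistedCenter σ) {a b : M} (hab : (a : M ⧸ D) = b) (k : M) :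
    antisymmetrization σ a k = antisymmetrization σ b k := by
  have hmem : a⁻¹ * b ∈ twistedCenter σ := hD (QuotientGroup.eq.mp hab)
  rw [← hσ.antisymmetrization_mul_left_of_mem_twistedCenter hmem (Commute.all a k),
    mul_inv_cancel_left]

theorem IsTwoCocycle.antisymmetrization_congr_right (hσ : IsTwoCocycle σ)
    (hD : (D : Set M) ⊆ twistedCenter σ) {a b : M} (hab : (a : M ⧸ D) = b) (k : M) :
    antisymmetrization σ k a = antisymmetrization σ k b := by
  rw [← inv_antisymmetrization σ a, ← inv_antisymmetrization σ b,
    hσ.antisymmetrization_congr_left hD hab]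

theorem IsTwoCocycle.antisymmetrization_quotientCocycle_mk (hσ : IsTwoCocycle σ)
    (hD : (D : Set M) ⊆ twistedCenter σ)
    (hc : Function.RightInverse c (QuotientGroup.mk : M → M ⧸ D)) (a b : M) :
    antisymmetrization (quotientCocycle σ c) (a : M ⧸ D) (b : M ⧸ D) =
      antisymmetrization σ a b := by
  rw [antisymmetrization_quotientCocycle, hσ.antisymmetrization_congr_left hD (hc a),
    hσ.antisymmetrization_congr_right hD (hc b)]

theorem IsTwoCocycle.preimage_twistedCenter_quotientCocycle (hσ : IsTwoCocycle σ)
    (hD : (D : Set M) ⊆ twistedCenter σ)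
    (hc : Function.RightInverse c (QuotientGroup.mk : M → M ⧸ D)) :
    QuotientGroup.mk ⁻¹' twistedCenter (quotientCocycle σ c) = twistedCenter σ := by
  ext a
  simp only [Set.mem_preimage, mem_twistedCenter_iff_antisymmetrization,
    QuotientGroup.mk_surjective.forall, hσ.antisymmetrization_quotientCocycle_mk hD hc]

end CommGroup

section Cosets

universe u

theorem preimage_mul_left_image {G H : Type*} [Group G] [Group H] (f : G →* H) (b : G)
    (A : Set H) :
    f ⁻¹' ((fun a => f b * a) '' A) = (fun a => b * a) '' (f ⁻¹' A) := by
  ext x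
  simp only [Set.image_mul_left, Set.mem_preimage, map_mul, map_inv]

theorem cosetsIn_preimage {G H : Type*} [Group G] [Group H] {f : G →* H}
    (hf : Function.Surjective f) (A B : Set H) :
    cosetsIn (f ⁻¹' A) (f ⁻¹' B) = Set.preimage f '' cosetsIn A B := by
  ext C
  constructor
  · rintro ⟨b, hb, rfl⟩
    exact ⟨_, ⟨f b, hb, rfl⟩, preimage_mul_left_image f b A⟩
  · rintro ⟨_, ⟨y, hy, rfl⟩, rfl⟩
    obtain ⟨b, rfl⟩ := hf y
    exact ⟨b, hy, preimage_mul_left_image f b A⟩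

theorem mk_cosetsIn_preimage {G H : Type u} [Group G] [Group H] {f : G →* H}
    (hf : Function.Surjective f) (A B : Set H) :
    Cardinal.mk (cosetsIn (f ⁻¹' A) (f ⁻¹' B)) = Cardinal.mk (cosetsIn A B) := by
  rw [cosetsIn_preimage hf]
  exact Cardinal.mk_image_eq hf.preimage_injective

end Cosets

/-- Let `M` be a discrete abelian group, `D ⊆ M` a subgroup and `σ` a
2-cocycle on `M` with `σ(d,m) = σ(m,d)` for all `d ∈ D`, `m ∈ M`.  Let `c : M/D → M` be
a section of the quotient map with `c(e) = e` and set
`τ(g,h) = σ(c(g),c(h))·σ(c(g)c(h)c(gh)⁻¹, c(gh))⁻¹`.  Then `D ⊆ Z(M,σ)`, the twisted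
center `Z(M/D,τ)` is the image of `Z(M,σ)` under the quotient map, and the index of
`Z(M/D,τ)` in `M/D` equals the index of `Z(M,σ)` in `M`. -/
theorem twistedCenter_quotient_eq_image
    (M : Type*) [CommGroup M] (D : Subgroup M)
    (σ : M → M → Circle) (hσ : IsTwoCocycle σ)
    (hD : ∀ d ∈ D, ∀ m : M, σ d m = σ m d)
    (c : M ⧸ D → M) (hc : ∀ x : M ⧸ D, QuotientGroup.mk (c x) = x) (hc1 : c 1 = 1)
    (τ : M ⧸ D → M ⧸ D → Circle)
    (hτ : ∀ g h : M ⧸ D,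
      τ g h = σ (c g) (c h) * (σ (c g * c h * (c (g * h))⁻¹) (c (g * h)))⁻¹) :
    (D : Set M) ⊆ twistedCenter σ ∧
      twistedCenter τ = QuotientGroup.mk '' twistedCenter σ ∧
      Cardinal.mk (cosetsIn (twistedCenter τ) (Set.univ : Set (M ⧸ D))) =
        Cardinal.mk (cosetsIn (twistedCenter σ) (Set.univ : Set M)) := by
  obtain rfl : τ = quotientCocycle σ c := funext₂ hτ
  have hDZ : (D : Set M) ⊆ twistedCenter σ := fun d hd => mem_twistedCenter_iff.mpr (hD d hd)
  have hpre : QuotientGroup.mk ⁻¹' twistedCenter (quotientCocycle σ c) = twistedCenter σ :=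
    hσ.preimage_twistedCenter_quotientCocycle hDZ hc
  refine ⟨hDZ, ?_, ?_⟩
  · rw [← hpre, Set.image_preimage_eq _ QuotientGroup.mk_surjective]
  · rw [← hpre]
    exact (mk_cosetsIn_preimage (QuotientGroup.mk'_surjective D) _ Set.univ).symm
end

section
/- Let G₁ and G₂ be discrete groups, σ₁ a 2-cocycle on G₁, σ₂ a 2-cocycle on G₂, and f : G₁ × G₂ → 𝕋 a bihomomorphism. Then the map σ on G₁ × G₂ defined by σ((g₁,g₂),(h₁,h₂)) = σ₁(g₁,h₁)σ₂(g₂,h₂)f(h₁,g₂) is a 2-cocycle on G₁ × G₂. -/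
namespace IsTwoCocycle

variable {G H : Type*} [Group G] [Group H]

theorem mul {σ τ : G → G → Circle} (hσ : IsTwoCocycle σ) (hτ : IsTwoCocycle τ) :
    IsTwoCocycle (σ * τ) := by
  obtain ⟨hσ_right, hσ_left, hσ_assoc⟩ := hσ
  obtain ⟨hτ_right, hτ_left, hτ_assoc⟩ := hτ
  refine ⟨fun g => ?_, fun g => ?_, fun g h k => ?_⟩
  · simp only [Pi.mul_apply, hσ_right, hτ_right, mul_one]
  · simp only [Pi.mul_apply, hσ_left, hτ_left, mul_one]
  · calc (σ g h * τ g h) * (σ (g * h) k * τ (g * h) k)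
        = (σ g h * σ (g * h) k) * (τ g h * τ (g * h) k) := mul_mul_mul_comm ..
      _ = (σ h k * σ g (h * k)) * (τ h k * τ g (h * k)) := by rw [hσ_assoc, hτ_assoc]
      _ = (σ h k * τ h k) * (σ g (h * k) * τ g (h * k)) := mul_mul_mul_comm ..

theorem comp_monoidHom {σ : H → H → Circle} (hσ : IsTwoCocycle σ) (φ : G →* H) :
    IsTwoCocycle fun g h => σ (φ g) (φ h) := by
  obtain ⟨hσ_right, hσ_left, hσ_assoc⟩ := hσ
  simp only [IsTwoCocycle, map_one, map_mul]
  exact ⟨fun g => hσ_right (φ g), fun g => hσ_left (φ g),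
    fun g h k => hσ_assoc (φ g) (φ h) (φ k)⟩

theorem of_bihom (B : G →* G →* Circle) : IsTwoCocycle fun g h => B g h := by
  refine ⟨fun g => map_one (B g), fun g => B.map_one₂ g, fun g h k => ?_⟩
  calc B g h * B (g * h) k
      = B g h * (B g k * B h k) := by rw [B.map_mul₂]
    _ = B h k * (B g h * B g k) := by rw [← mul_assoc, mul_comm]
    _ = B h k * B g (h * k) := by rw [map_mul (B g)]

end IsTwoCocycle

/-- Given 2-cocycles `σ₁` on `G₁` and `σ₂` on `G₂` and a
bihomomorphism `f : G₁ × G₂ → 𝕋`, the map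
`σ((g₁,g₂),(h₁,h₂)) = σ₁(g₁,h₁)σ₂(g₂,h₂)f(h₁,g₂)` is a 2-cocycle on `G₁ × G₂`. -/
theorem isTwoCocycle_product
    (G₁ G₂ : Type*) [Group G₁] [Group G₂]
    (σ₁ : G₁ → G₁ → Circle) (hσ₁ : IsTwoCocycle σ₁)
    (σ₂ : G₂ → G₂ → Circle) (hσ₂ : IsTwoCocycle σ₂)
    (f : G₁ → G₂ → Circle)
    (hf₁ : ∀ g g' : G₁, ∀ h : G₂, f (g * g') h = f g h * f g' h)
    (hf₂ : ∀ g : G₁, ∀ h h' : G₂, f g (h * h') = f g h * f g h') :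
    IsTwoCocycle (fun g h : G₁ × G₂ => σ₁ g.1 h.1 * σ₂ g.2 h.2 * f h.1 g.2) := by
  let F : G₁ →* G₂ →* Circle :=
    MonoidHom.mk' (fun g => MonoidHom.mk' (f g) (hf₂ g)) fun g g' => MonoidHom.ext (hf₁ g g')
  have h₁ : IsTwoCocycle fun g h : G₁ × G₂ => σ₁ g.1 h.1 :=
    hσ₁.comp_monoidHom (MonoidHom.fst G₁ G₂)
  have h₂ : IsTwoCocycle fun g h : G₁ × G₂ => σ₂ g.2 h.2 :=
    hσ₂.comp_monoidHom (MonoidHom.snd G₁ G₂)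
  have h_f : IsTwoCocycle fun g h : G₁ × G₂ => f h.1 g.2 :=
    .of_bihom ((MonoidHom.compHom' (MonoidHom.fst G₁ G₂)).comp (F.flip.comp (MonoidHom.snd G₁ G₂)))
  exact (h₁.mul h₂).mul h_f
end

section
/- Let G(3) be the group with underlying set ℤ⁶ and multiplication (r₁,r₂,r₃,r₁₂,r₁₃,r₂₃)(s₁,s₂,s₃,s₁₂,s₁₃,s₂₃) = (r₁+s₁, r₂+s₂, r₃+s₃, r₁₂+s₁₂+r₁s₂, r₁₃+s₁₃+r₁s₃, r₂₃+s₂₃+r₂s₃). Let θ be an irrational real number and define σ : G(3) × G(3) → 𝕋 by σ(r,s) = exp(2πiθ(s₁₃r₂ + s₃(r₁r₂ − r₁₂) + s₁₃r₁ + ½s₃r₁(r₁−1) + r₃(s₁₃ + r₁s₃) + ½r₁s₃(s₃−1))). Then the twisted center Z(G(3),σ) is exactly the set of elements of the form (0,0,0,0,0,r₂₃) with r₂₃ ∈ ℤ. -/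
/-!
An element of `G(3)` is central iff its first three coordinates vanish. For such `g`, the identity
`σ(g,h) = σ(h,g)` says that `θ (h₃ g₁₂ + (h₁ + h₂ + h₃) g₁₃)` is an integer. As `h` varies this
amounts to `θ g₁₂ ∈ ℤ` and `θ g₁₃ ∈ ℤ`, which for irrational `θ` forces `g₁₂ = g₁₃ = 0`.
-/

/-- The free 2-step nilpotent group on three generators, realized set-theoretically as
`ℤ⁶` with elements `(r₁, r₂, r₃, r₁₂, r₁₃, r₂₃)`. -/
@[ext] structure GThree : Type where
  a1 : ℤ
  a2 : ℤ
  a3 : ℤ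
  a12 : ℤ
  a13 : ℤ
  a23 : ℤ

namespace GThree

instance : Mul GThree :=
  ⟨fun r s =>
    ⟨r.a1 + s.a1, r.a2 + s.a2, r.a3 + s.a3, r.a12 + s.a12 + r.a1 * s.a2,
      r.a13 + s.a13 + r.a1 * s.a3, r.a23 + s.a23 + r.a2 * s.a3⟩⟩

instance : One GThree := ⟨⟨0, 0, 0, 0, 0, 0⟩⟩

instance : Inv GThree :=
  ⟨fun r =>
    ⟨-r.a1, -r.a2, -r.a3, -r.a12 + r.a1 * r.a2, -r.a13 + r.a1 * r.a3,
      -r.a23 + r.a2 * r.a3⟩⟩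

@[simp] lemma mul_def (r s : GThree) :
    r * s =
      ⟨r.a1 + s.a1, r.a2 + s.a2, r.a3 + s.a3, r.a12 + s.a12 + r.a1 * s.a2,
        r.a13 + s.a13 + r.a1 * s.a3, r.a23 + s.a23 + r.a2 * s.a3⟩ := rfl

@[simp] lemma one_def : (1 : GThree) = ⟨0, 0, 0, 0, 0, 0⟩ := rfl

@[simp] lemma inv_def (r : GThree) :
    r⁻¹ =
      ⟨-r.a1, -r.a2, -r.a3, -r.a12 + r.a1 * r.a2, -r.a13 + r.a1 * r.a3,
        -r.a23 + r.a2 * r.a3⟩ := rfl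

instance : Group GThree :=
  Group.ofLeftAxioms
    (fun a b c => by ext <;> simp <;> ring)
    (fun a => by ext <;> simp)
    (fun a => by ext <;> simp <;> ring)

end GThree

/-- The 2-cocycle `σ` on `G(3)` associated to the parameter `θ`, given by
`σ(r,s) = exp(2πiθ(s₁₃r₂ + s₃(r₁r₂ − r₁₂) + s₁₃r₁ + ½s₃r₁(r₁−1)
            + r₃(s₁₃ + r₁s₃) + ½r₁s₃(s₃−1)))`. -/
noncomputable def sigmaGThree (θ : ℝ) (r s : GThree) : Circle :=
  Circle.exp (2 * Real.pi * θ *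
    ((s.a13 : ℝ) * (r.a2 : ℝ) + (s.a3 : ℝ) * ((r.a1 : ℝ) * (r.a2 : ℝ) - (r.a12 : ℝ)) +
      (s.a13 : ℝ) * (r.a1 : ℝ) + (1 / 2) * (s.a3 : ℝ) * (r.a1 : ℝ) * ((r.a1 : ℝ) - 1) +
      (r.a3 : ℝ) * ((s.a13 : ℝ) + (r.a1 : ℝ) * (s.a3 : ℝ)) +
      (1 / 2) * (r.a1 : ℝ) * (s.a3 : ℝ) * ((s.a3 : ℝ) - 1)))

namespace GThree

lemma mem_center_iff {g : GThree} :
    g ∈ Subgroup.center GThree ↔ g.a1 = 0 ∧ g.a2 = 0 ∧ g.a3 = 0 := by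
  rw [Subgroup.mem_center_iff]
  constructor
  · intro commutes
    have comm_x₁ := commutes ⟨1, 0, 0, 0, 0, 0⟩
    have comm_x₂ := commutes ⟨0, 1, 0, 0, 0, 0⟩
    simp only [mul_def, mk.injEq] at comm_x₁ comm_x₂
    exact ⟨by lia, by lia, by lia⟩
  · rintro ⟨hg₁, hg₂, hg₃⟩ h
    ext <;> simp [hg₁, hg₂, hg₃, add_comm]

end GThree

lemma circle_exp_two_pi_mul_eq_iff {x y : ℝ} :
    Circle.exp (2 * Real.pi * x) = Circle.exp (2 * Real.pi * y) ↔ ∃ m : ℤ, x = y + m := by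
  rw [Circle.exp_eq_exp]
  refine exists_congr fun m ↦ ?_
  rw [mul_comm (m : ℝ), ← mul_add, mul_right_inj' Real.two_pi_pos.ne']

lemma exists_mul_intCast_eq_intCast_iff_of_irrational {θ : ℝ} (hθ : Irrational θ) {n : ℤ} :
    (∃ m : ℤ, θ * n = m) ↔ n = 0 := by
  refine ⟨fun ⟨m, hm⟩ ↦ ?_, fun hn ↦ ⟨0, by simp [hn]⟩⟩
  by_contra hn
  exact (hθ.mul_intCast hn).ne_int m hm

lemma sigmaGThree_comm_iff_of_mem_center {θ : ℝ} {g : GThree}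
    (hg : g ∈ Subgroup.center GThree) (h : GThree) :
    sigmaGThree θ g h = sigmaGThree θ h g ↔
      ∃ m : ℤ, θ * (h.a3 * g.a12 + (h.a1 + h.a2 + h.a3) * g.a13) = m := by
  obtain ⟨hg₁, hg₂, hg₃⟩ := GThree.mem_center_iff.mp hg
  have left : sigmaGThree θ g h = Circle.exp (2 * Real.pi * (-θ * (h.a3 * g.a12))) := by
    simp only [sigmaGThree, hg₁, hg₂, hg₃]
    congr 1
    push_cast
    ring
  have right : sigmaGThree θ h g =
      Circle.exp (2 * Real.pi * (θ * ((h.a1 + h.a2 + h.a3) * g.a13))) := by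
    simp only [sigmaGThree, hg₃]
    congr 1
    push_cast
    ring
  rw [left, eq_comm, right, circle_exp_two_pi_mul_eq_iff]
  refine exists_congr fun m ↦ ?_
  constructor <;> intro hm <;> linarith

theorem twistedCenter_GThree_general (θ : ℝ) :
    twistedCenter (sigmaGThree θ) =
      {g : GThree | g.a1 = 0 ∧ g.a2 = 0 ∧ g.a3 = 0 ∧
        (∃ m : ℤ, θ * g.a12 = m) ∧ ∃ m : ℤ, θ * g.a13 = m} := by
  ext g
  constructor
  · rintro ⟨hg, hσ⟩
    have integral := fun h ↦ (sigmaGThree_comm_iff_of_mem_center hg h).mp (hσ h)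
    obtain ⟨hg₁, hg₂, hg₃⟩ := GThree.mem_center_iff.mp hg
    -- The element `(0, -1, 1, 0, 0, 0)` has coordinate sum `0`, which isolates `g.a12`.
    exact ⟨hg₁, hg₂, hg₃, by simpa using integral ⟨0, -1, 1, 0, 0, 0⟩,
      by simpa using integral ⟨1, 0, 0, 0, 0, 0⟩⟩
  · rintro ⟨hg₁, hg₂, hg₃, ⟨m, hm⟩, n, hn⟩
    have hg : g ∈ Subgroup.center GThree := GThree.mem_center_iff.mpr ⟨hg₁, hg₂, hg₃⟩
    refine ⟨hg, fun h ↦ (sigmaGThree_comm_iff_of_mem_center hg h).mpr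
      ⟨h.a3 * m + (h.a1 + h.a2 + h.a3) * n, ?_⟩⟩
    push_cast
    rw [← hm, ← hn]
    ring

/-- For an irrational `θ`, the twisted center of `(G(3), σ)` is
exactly the set of elements of the form `(0, 0, 0, 0, 0, r₂₃)`. -/
theorem twistedCenter_GThree (θ : ℝ) (hθ : Irrational θ) :
    twistedCenter (sigmaGThree θ) =
      {g : GThree | g.a1 = 0 ∧ g.a2 = 0 ∧ g.a3 = 0 ∧ g.a12 = 0 ∧ g.a13 = 0} := by
  simp only [twistedCenter_GThree_general, exists_mul_intCast_eq_intCast_iff_of_irrational hθ]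
end

section
/- Let d₂ ≥ 1 be an integer and p an integer coprime to d₂, and let H = H(1,d₂) be the group with underlying set ℤ × ℤ² × ℤ² and multiplication (r,s,t)(r',s',t') = (r + r' + t₁s₁' + d₂t₂s₂', s+s', t+t'). Let θ be an irrational real number and define σ : H × H → 𝕋 by σ((r,s,t),(r',s',t')) = exp(2πi(p/d₂)(s₁'r + t₁s₁'(s₁'−1)/2))·exp(2πiθ s₂'t₂). Then the twisted center Z(H,σ) is exactly the set {(r,0,0) : r ∈ d₂ℤ}. -/
/-- The generalized discrete Heisenberg group `H(1, d₂)`, realized set-theoretically as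
`ℤ × ℤ² × ℤ²` with elements `(r, (s₁, s₂), (t₁, t₂))` and multiplication
`(r,s,t)(r',s',t') = (r + r' + t₁s₁' + d₂t₂s₂', s + s', t + t')`. -/
@[ext] structure HeisGen (d2 : ℤ) : Type where
  r : ℤ
  s1 : ℤ
  s2 : ℤ
  t1 : ℤ
  t2 : ℤ

namespace HeisGen

variable {d2 : ℤ}

instance : Mul (HeisGen d2) :=
  ⟨fun x y =>
    ⟨x.r + y.r + x.t1 * y.s1 + d2 * x.t2 * y.s2, x.s1 + y.s1, x.s2 + y.s2,
      x.t1 + y.t1, x.t2 + y.t2⟩⟩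

instance : One (HeisGen d2) := ⟨⟨0, 0, 0, 0, 0⟩⟩

instance : Inv (HeisGen d2) :=
  ⟨fun x =>
    ⟨-x.r + x.t1 * x.s1 + d2 * x.t2 * x.s2, -x.s1, -x.s2, -x.t1, -x.t2⟩⟩

@[simp] lemma mul_def (x y : HeisGen d2) :
    x * y =
      ⟨x.r + y.r + x.t1 * y.s1 + d2 * x.t2 * y.s2, x.s1 + y.s1, x.s2 + y.s2,
        x.t1 + y.t1, x.t2 + y.t2⟩ := rfl

@[simp] lemma one_def : (1 : HeisGen d2) = ⟨0, 0, 0, 0, 0⟩ := rfl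

@[simp] lemma inv_def (x : HeisGen d2) :
    x⁻¹ = ⟨-x.r + x.t1 * x.s1 + d2 * x.t2 * x.s2, -x.s1, -x.s2, -x.t1, -x.t2⟩ := rfl

instance : Group (HeisGen d2) :=
  Group.ofLeftAxioms
    (fun a b c => by ext <;> simp <;> ring)
    (fun a => by ext <;> simp)
    (fun a => by ext <;> simp <;> ring)

end HeisGen

/-- The 2-cocycle `σ` on `H(1,d₂)` given by
`σ((r,s,t),(r',s',t')) = e^{2πi(p/d₂)(s₁'r + t₁s₁'(s₁'−1)/2)}·e^{2πiθs₂'t₂}`. -/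
noncomputable def sigmaHeis (d2 p : ℤ) (θ : ℝ) (x y : HeisGen d2) : Circle :=
  Circle.exp (2 * Real.pi * ((p : ℝ) / (d2 : ℝ)) *
      ((y.s1 : ℝ) * (x.r : ℝ) + (x.t1 : ℝ) * (y.s1 : ℝ) * ((y.s1 : ℝ) - 1) / 2)) *
    Circle.exp (2 * Real.pi * θ * ((y.s2 : ℝ) * (x.t2 : ℝ)))

/-!
A central element has the form `g = (r, 0, 0)`. For `h = (r', s', t')` one then has
`σ(h, g) = 1` and `σ(g, h) = e^{2πi p r s₁'/d₂}`, and the latter is trivial for all `s₁'` exactly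
when `d₂` divides `p r`; for `p` coprime to `d₂` this says that `d₂` divides `r`.
-/

lemma circleExp_two_pi_mul_div_eq_one_iff {n : ℤ} (hn : n ≠ 0) (k : ℤ) :
    Circle.exp (2 * Real.pi * ((k : ℝ) / n)) = 1 ↔ n ∣ k := by
  have hn_cast : (n : ℝ) ≠ 0 := Int.cast_ne_zero.mpr hn
  have htwo_pi : 2 * Real.pi ≠ 0 := Real.two_pi_pos.ne'
  rw [Circle.exp_eq_one]
  refine exists_congr fun m ↦ ?_
  rw [mul_comm (m : ℝ), mul_right_inj' htwo_pi, div_eq_iff hn_cast, mul_comm (m : ℝ)]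
  exact_mod_cast Iff.rfl

namespace HeisGen

variable {d2 : ℤ}

lemma commute_iff {x y : HeisGen d2} :
    Commute x y ↔ x.t1 * y.s1 + d2 * x.t2 * y.s2 = y.t1 * x.s1 + d2 * y.t2 * x.s2 := by
  simp only [commute_iff_eq, mul_def, HeisGen.ext_iff, add_comm y.s1, add_comm y.s2,
    add_comm y.t1, add_comm y.t2, and_true]
  constructor <;> intro h <;> linarith

lemma mem_center_iff (hd2 : d2 ≠ 0) {g : HeisGen d2} :
    g ∈ Subgroup.center (HeisGen d2) ↔ g.s1 = 0 ∧ g.s2 = 0 ∧ g.t1 = 0 ∧ g.t2 = 0 := by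
  simp only [Subgroup.mem_center_iff, ← commute_iff_eq, commute_iff]
  constructor
  · intro hg
    have hs1 : g.s1 = 0 := by simpa using hg ⟨0, 0, 0, 1, 0⟩
    have hs2 : g.s2 = 0 := by simpa [hd2] using hg ⟨0, 0, 0, 0, 1⟩
    have ht1 : g.t1 = 0 := by simpa using (hg ⟨0, 1, 0, 0, 0⟩).symm
    have ht2 : g.t2 = 0 := by simpa [hd2] using (hg ⟨0, 0, 1, 0, 0⟩).symm
    exact ⟨hs1, hs2, ht1, ht2⟩
  · rintro ⟨hs1, hs2, ht1, ht2⟩ h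
    simp only [hs1, hs2, ht1, ht2, mul_zero, zero_mul]

end HeisGen

section

variable {d2 : ℤ} (p : ℤ) (θ : ℝ)

lemma sigmaHeis_eq_one_of_right_s_eq_zero (x : HeisGen d2) {y : HeisGen d2}
    (hs1 : y.s1 = 0) (hs2 : y.s2 = 0) : sigmaHeis d2 p θ x y = 1 := by
  simp [sigmaHeis, hs1, hs2]

lemma sigmaHeis_eq_circleExp_of_left_t_eq_zero {x : HeisGen d2} (y : HeisGen d2)
    (ht1 : x.t1 = 0) (ht2 : x.t2 = 0) :
    sigmaHeis d2 p θ x y = Circle.exp (2 * Real.pi * (((p * x.r * y.s1 : ℤ) : ℝ) / d2)) := by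
  simp only [sigmaHeis, ht1, ht2, Int.cast_zero, Int.cast_mul, zero_mul, zero_div, mul_zero,
    add_zero, Circle.exp_zero, mul_one]
  congr 1
  ring

lemma forall_sigmaHeis_comm_iff (hd2 : d2 ≠ 0) {g : HeisGen d2}
    (hs1 : g.s1 = 0) (hs2 : g.s2 = 0) (ht1 : g.t1 = 0) (ht2 : g.t2 = 0) :
    (∀ h, sigmaHeis d2 p θ g h = sigmaHeis d2 p θ h g) ↔ d2 ∣ p * g.r := by
  simp only [sigmaHeis_eq_circleExp_of_left_t_eq_zero p θ _ ht1 ht2,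
    sigmaHeis_eq_one_of_right_s_eq_zero p θ _ hs1 hs2, circleExp_two_pi_mul_div_eq_one_iff hd2]
  constructor
  · intro hdvd
    simpa only [mul_one] using hdvd ⟨0, 1, 0, 0, 0⟩
  · exact fun hdvd h ↦ hdvd.mul_right h.s1

end

theorem twistedCenter_HeisGen_general {d2 : ℤ} (hd2 : d2 ≠ 0) (p : ℤ) (θ : ℝ) :
    twistedCenter (sigmaHeis d2 p θ) =
      {g : HeisGen d2 | g.s1 = 0 ∧ g.s2 = 0 ∧ g.t1 = 0 ∧ g.t2 = 0 ∧ d2 ∣ p * g.r} := by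
  ext g
  simp only [twistedCenter, Set.mem_ofPred_eq, HeisGen.mem_center_iff hd2]
  constructor
  · rintro ⟨⟨hs1, hs2, ht1, ht2⟩, hsymm⟩
    exact ⟨hs1, hs2, ht1, ht2, (forall_sigmaHeis_comm_iff p θ hd2 hs1 hs2 ht1 ht2).mp hsymm⟩
  · rintro ⟨hs1, hs2, ht1, ht2, hdvd⟩
    exact ⟨⟨hs1, hs2, ht1, ht2⟩, (forall_sigmaHeis_comm_iff p θ hd2 hs1 hs2 ht1 ht2).mpr hdvd⟩

/-- Let `d₂ ≥ 1`, let `p` be coprime to `d₂` and let `θ` be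
irrational.  Then the twisted center of `(H(1,d₂), σ)` is exactly
`{(r, 0, 0) : r ∈ d₂ℤ}`. -/
theorem twistedCenter_HeisGen (d2 p : ℤ) (hd2 : 1 ≤ d2) (hp : Int.gcd p d2 = 1)
    (θ : ℝ) (hθ : Irrational θ) :
    twistedCenter (sigmaHeis d2 p θ) =
      {g : HeisGen d2 | g.s1 = 0 ∧ g.s2 = 0 ∧ g.t1 = 0 ∧ g.t2 = 0 ∧ d2 ∣ g.r} := by
  have dvd_mul_iff (r : ℤ) : d2 ∣ p * r ↔ d2 ∣ r :=
    ⟨(Int.isCoprime_iff_gcd_eq_one.mpr hp).symm.dvd_of_dvd_mul_left, fun h ↦ h.mul_left p⟩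
  simpa only [dvd_mul_iff] using twistedCenter_HeisGen_general (by lia : d2 ≠ 0) p θ
end

section
/- Let Γ = ℤ × H₃(ℤ) be the group with underlying set ℤ⁴ and multiplication (k₁,k₂,k₃,k₄)(l₁,l₂,l₃,l₄) = (k₁+l₁, k₂+l₂+k₄l₃, k₃+l₃, k₄+l₄). For real numbers α, β > 0 define σ_{α,β} : Γ × Γ → 𝕋 by σ_{α,β}((k₁,…,k₄),(l₁,…,l₄)) = exp(2πi(−αβk₁l₃ + β³k₄l₂ + β³k₄²l₃/2)). Then the twisted center Z(Γ,σ_{α,β}) is exactly the set {(k₁,k₂,0,0) : k₁,k₂ ∈ ℤ, αβk₁ ∈ ℤ, β³k₂ ∈ ℤ}. -/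
/-- The group `Γ = ℤ × H₃(ℤ)` (`H₃(ℤ)` the integer Heisenberg group), realized
set-theoretically as `ℤ⁴` with multiplication
`(k₁,k₂,k₃,k₄)(l₁,l₂,l₃,l₄) = (k₁+l₁, k₂+l₂+k₄l₃, k₃+l₃, k₄+l₄)`. -/
@[ext] structure Gam : Type where
  k1 : ℤ
  k2 : ℤ
  k3 : ℤ
  k4 : ℤ

namespace Gam

instance : Mul Gam :=
  ⟨fun x y => ⟨x.k1 + y.k1, x.k2 + y.k2 + x.k4 * y.k3, x.k3 + y.k3, x.k4 + y.k4⟩⟩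

instance : One Gam := ⟨⟨0, 0, 0, 0⟩⟩

instance : Inv Gam :=
  ⟨fun x => ⟨-x.k1, -x.k2 + x.k4 * x.k3, -x.k3, -x.k4⟩⟩

@[simp] lemma mul_def (x y : Gam) :
    x * y = ⟨x.k1 + y.k1, x.k2 + y.k2 + x.k4 * y.k3, x.k3 + y.k3, x.k4 + y.k4⟩ := rfl

@[simp] lemma one_def : (1 : Gam) = ⟨0, 0, 0, 0⟩ := rfl

@[simp] lemma inv_def (x : Gam) :
    x⁻¹ = ⟨-x.k1, -x.k2 + x.k4 * x.k3, -x.k3, -x.k4⟩ := rfl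

instance : Group Gam :=
  Group.ofLeftAxioms
    (fun a b c => by ext <;> simp <;> ring)
    (fun a => by ext <;> simp)
    (fun a => by ext <;> simp <;> ring)

end Gam

/-- The 2-cocycle `σ_{α,β}` on `Γ` given by
`σ_{α,β}(k,l) = exp(2πi(−αβk₁l₃ + β³k₄l₂ + β³k₄²l₃/2))`. -/
noncomputable def sigmaGam (α β : ℝ) (x y : Gam) : Circle :=
  Circle.exp (2 * Real.pi *
    (-(α * β) * (x.k1 : ℝ) * (y.k3 : ℝ) + β ^ 3 * (x.k4 : ℝ) * (y.k2 : ℝ) +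
      β ^ 3 * (x.k4 : ℝ) ^ 2 * (y.k3 : ℝ) / 2))

/-!
The products `gh` and `hg` differ only in the second coordinate, by `g₄h₃ - h₄g₃`, so `g` is central
exactly when `g₃ = g₄ = 0`. For such `g` the phases of `σ(h,g)` and `σ(g,h)` differ by the linear
form `αβg₁h₃ + β³g₂h₄` in `(h₃, h₄)`, which takes only integer values on `ℤ²` exactly when both of
its coefficients are integers.
-/

theorem circleExp_two_pi_mul_eq_iff {x y : ℝ} :
    Circle.exp (2 * Real.pi * x) = Circle.exp (2 * Real.pi * y) ↔ ∃ n : ℤ, x - y = n := by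
  refine Circle.exp_eq_exp.trans (exists_congr fun n => ?_)
  calc 2 * Real.pi * x = 2 * Real.pi * y + n * (2 * Real.pi)
      ↔ 2 * Real.pi * x = 2 * Real.pi * (y + n) := by ring_nf
    _ ↔ x = y + n := mul_right_inj' Real.two_pi_pos.ne'
    _ ↔ x - y = n := sub_eq_iff_eq_add'.symm

theorem forall_exists_mul_add_mul_eq_intCast_iff {R : Type*} [NonAssocRing R] {x y : R} :
    (∀ p q : ℤ, ∃ n : ℤ, x * p + y * q = n) ↔ (∃ m : ℤ, x = m) ∧ ∃ n : ℤ, y = n := by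
  constructor
  · intro h
    exact ⟨by simpa using h 1 0, by simpa using h 0 1⟩
  · rintro ⟨⟨m, rfl⟩, ⟨n, rfl⟩⟩ p q
    exact ⟨m * p + n * q, by push_cast; rfl⟩

namespace Gam

theorem commute_iff {g h : Gam} : Commute g h ↔ g.k4 * h.k3 = h.k4 * g.k3 := by
  simp only [commute_iff_eq, mul_def, Gam.ext_iff]
  constructor
  · rintro ⟨-, hk2, -, -⟩
    linarith
  · intro hk
    exact ⟨add_comm _ _, by linarith, add_comm _ _, add_comm _ _⟩

theorem mem_center_iff {g : Gam} : g ∈ Subgroup.center Gam ↔ g.k3 = 0 ∧ g.k4 = 0 := by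
  have hcomm : g ∈ Subgroup.center Gam ↔ ∀ h : Gam, g.k4 * h.k3 = h.k4 * g.k3 :=
    Subgroup.mem_center_iff.trans (forall_congr' fun _ => eq_comm.trans commute_iff)
  rw [hcomm]
  constructor
  · intro h
    exact ⟨by simpa using (h ⟨0, 0, 0, 1⟩).symm, by simpa using h ⟨0, 0, 1, 0⟩⟩
  · rintro ⟨hk3, hk4⟩ h
    simp only [hk3, hk4, zero_mul, mul_zero]

end Gam

theorem sigmaGam_comm_iff (α β : ℝ) {g : Gam} (hg : g ∈ Subgroup.center Gam) (h : Gam) :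
    sigmaGam α β g h = sigmaGam α β h g ↔
      ∃ n : ℤ, α * β * g.k1 * h.k3 + β ^ 3 * g.k2 * h.k4 = n := by
  obtain ⟨hk3, hk4⟩ := Gam.mem_center_iff.mp hg
  rw [eq_comm, sigmaGam, sigmaGam, circleExp_two_pi_mul_eq_iff]
  refine exists_congr fun n => Eq.congr_left ?_
  rw [hk3, hk4, Int.cast_zero]
  ring

theorem forall_sigmaGam_comm_iff (α β : ℝ) {g : Gam} (hg : g ∈ Subgroup.center Gam) :
    (∀ h, sigmaGam α β g h = sigmaGam α β h g) ↔
      (∃ m : ℤ, α * β * g.k1 = m) ∧ ∃ n : ℤ, β ^ 3 * g.k2 = n := by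
  simp only [sigmaGam_comm_iff α β hg]
  rw [← forall_exists_mul_add_mul_eq_intCast_iff]
  exact ⟨fun hint p q => hint ⟨0, 0, p, q⟩, fun hint h => hint h.k3 h.k4⟩

/-- For `α, β > 0`, the twisted center `Z(Γ, σ_{α,β})` is exactly the
set `{(k₁,k₂,0,0) : αβk₁ ∈ ℤ, β³k₂ ∈ ℤ}`. -/
theorem twistedCenter_Gam (α β : ℝ) (hα : 0 < α) (hβ : 0 < β) :
    twistedCenter (sigmaGam α β) =
      {g : Gam | g.k3 = 0 ∧ g.k4 = 0 ∧ (∃ m : ℤ, α * β * (g.k1 : ℝ) = (m : ℝ)) ∧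
        ∃ n : ℤ, β ^ 3 * (g.k2 : ℝ) = (n : ℝ)} := by
  ext g
  calc g ∈ twistedCenter (sigmaGam α β)
      ↔ g ∈ Subgroup.center Gam ∧ (∃ m : ℤ, α * β * (g.k1 : ℝ) = m) ∧
          ∃ n : ℤ, β ^ 3 * (g.k2 : ℝ) = n :=
        and_congr_right fun hg => forall_sigmaGam_comm_iff α β hg
    _ ↔ _ := by rw [Gam.mem_center_iff, and_assoc, Set.mem_ofPred_eq]
end
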